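/- For every integer k ≥ 5, TSP/k-Opt has the all-exp property: there are infinitely many pairs of a TSP instance and an initial tour such that every maximal improving k-swap sequence starting from the initial tour has length exponential in the number of vertices of the instance; equivalently, the k-Opt algorithm started from this tour needs an exponential number of iterations under every pivot rule. -/

import Mathlib

/-!
Statement 0: For every integer k ≥ 5, TSP/k-Opt has the all-exp property.

A TSP instance on `Fin n` is given by a nonnegative weight function on `Sym2 (Fin n)`
(the underlying graph being complete). A tour is a Hamiltonian cycle, modelled as a
permutation which is a single cycle through all vertices.
-/

open Finset

variable {V : Type*} [Fintype V] [DecidableEq V]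

/-- A tour: a permutation of the vertices forming one cycle through all of them. -/
def IsTour (σ : Equiv.Perm V) : Prop :=
  σ.IsCycle ∧ σ.support = Finset.univ

/-- The set of edges used by a tour. -/
def tourEdges (σ : Equiv.Perm V) : Finset (Sym2 V) :=
  Finset.univ.image fun v => s(v, σ v)

/-- The total weight of a tour. -/
def tourWeight (w : Sym2 V → ℝ) (σ : Equiv.Perm V) : ℝ :=
  ∑ e ∈ tourEdges σ, w e

/-- A `k`-swap: replace at most `k` edges of the tour (with equally many new edges)
so that again a tour results. -/
def IsKSwap (k : ℕ) (σ σ' : Equiv.Perm V) : Prop :=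
  IsTour σ' ∧ (tourEdges σ \ tourEdges σ').card ≤ k

/-- An improving `k`-swap strictly decreases the total tour weight. -/
def ImprovingKSwap (w : Sym2 V → ℝ) (k : ℕ) (σ σ' : Equiv.Perm V) : Prop :=
  IsKSwap k σ σ' ∧ tourWeight w σ' < tourWeight w σ

/-- A k-Opt locally optimal tour: no improving `k`-swap exists. -/
def IsLocalOpt (w : Sym2 V → ℝ) (k : ℕ) (σ : Equiv.Perm V) : Prop :=
  ∀ σ', ¬ ImprovingKSwap w k σ σ'

/-- Improving `k`-swap sequences starting from a given tour. -/
def ImprovingSwapSeq (w : Sym2 V → ℝ) (k : ℕ) : Equiv.Perm V → List (Equiv.Perm V) → Prop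
  | _, [] => True
  | σ, τ :: l => ImprovingKSwap w k σ τ ∧ ImprovingSwapSeq w k τ l

/-- A maximal improving `k`-swap sequence: an improving sequence ending at a
k-Opt locally optimal tour. -/
def MaximalImprovingSwapSeq (w : Sym2 V → ℝ) (k : ℕ) (σ₀ : Equiv.Perm V)
    (l : List (Equiv.Perm V)) : Prop :=
  ImprovingSwapSeq w k σ₀ l ∧ IsLocalOpt w k ((σ₀ :: l).getLast (List.cons_ne_nil _ _))

/-- The all-exp property for TSP/k-Opt: there is a constant `c > 1` such that for
infinitely many sizes `n` there are a TSP instance on `n` vertices and an initial tour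
from which every maximal improving `k`-swap sequence has length at least `c ^ n`,
i.e. the k-Opt algorithm needs exponentially many iterations under every pivot rule. -/
def TSPKOptAllExp (k : ℕ) : Prop :=
  ∃ c : ℝ, 1 < c ∧
    ∀ N : ℕ, ∃ n : ℕ, N ≤ n ∧
      ∃ (w : Sym2 (Fin n) → ℝ) (τ₀ : Equiv.Perm (Fin n)),
        (∀ e, 0 ≤ w e) ∧ IsTour τ₀ ∧
        ∀ l : List (Equiv.Perm (Fin n)),
          MaximalImprovingSwapSeq w k τ₀ l → c ^ n ≤ (l.length : ℝ)

/-!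
The instance is a chain of `m + 2` gears, cycles of `2 * P` vertices. A light tour runs through each
gear along all its edges but one, so that it leaves the gear at most one position beyond the one
where it entered, and it enters the next gear at `0`, `1` or `2` plus twice the position where it
left the current one. Every tour lighter than the initial one is of this kind.

As long as some gear can move forward, advancing a single position is an improving 2-swap, since the
gears get finer along the chain. Hence in a local optimum all positions are as far advanced as
possible, and the last gear has moved from `0` to at least `2 ^ (m + 1)`. On the other hand, a
`k`-swap moves at most `k` gears, and a displacement at most doubles (plus a constant) from one gear
to the next and is zero at a gear which does not move; so a `k`-swap moves the last gear by at most
`3 * 2 ^ k`. The size `P = 6 * 2 ^ k`, large enough to tell displacements apart modulo `P`, does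
not depend on `m`, so the number of vertices is linear in `m`.
-/

section Tour

variable {σ τ : Equiv.Perm V} {u v p q : V}

namespace IsTour

lemma apply_ne (h : IsTour σ) (v : V) : σ v ≠ v :=
  Equiv.Perm.mem_support.1 (h.2 ▸ mem_univ v)

lemma induction_on (h : IsTour σ) {S : V → Prop} (hv : S v) (hS : ∀ x, S x → S (σ x)) (u : V) :
    S u := by
  obtain ⟨n, rfl⟩ := (h.1.sameCycle (h.apply_ne v) (h.apply_ne u)).exists_nat_pow_eq
  induction n with
  | zero => exact hv
  | succ n ih =>
    rw [pow_succ', Equiv.Perm.mul_apply]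
    exact hS _ ih

lemma of_sameCycle (hv : σ v ≠ v) (h : ∀ u, σ.SameCycle v u) : IsTour σ := by
  refine ⟨⟨v, hv, fun u _ => h u⟩, eq_univ_of_forall fun u => Equiv.Perm.mem_support.2 fun hu => ?_⟩
  exact hv ((h u).apply_eq_self_iff.2 hu)

lemma apply_apply_ne (h : IsTour σ) (hV : 3 ≤ Fintype.card V) (v : V) : σ (σ v) ≠ v := by
  intro hv
  have hsub : (univ : Finset V) ⊆ {v, σ v} := fun x _ => by
    simpa using h.induction_on (S := fun x => x = v ∨ x = σ v) (Or.inl rfl)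
      (by rintro x (rfl | rfl) <;> simp [hv]) x
  have := (card_le_card hsub).trans card_le_two
  rw [card_univ] at this
  omega

lemma symm_apply_ne_apply (h : IsTour σ) (hV : 3 ≤ Fintype.card V) (v : V) :
    σ.symm v ≠ σ v := fun hv =>
  h.apply_apply_ne hV v (by rw [← hv, Equiv.apply_symm_apply])

end IsTour

lemma mk_mem_tourEdges : s(u, v) ∈ tourEdges σ ↔ v = σ u ∨ v = σ.symm u := by
  simp only [tourEdges, mem_image, mem_univ, true_and, Sym2.eq_iff, Equiv.eq_symm_apply]
  constructor
  · rintro ⟨x, ⟨rfl, rfl⟩ | ⟨rfl, rfl⟩⟩ <;> simp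
  · rintro (rfl | rfl)
    exacts [⟨u, by simp⟩, ⟨v, by simp⟩]

lemma eq_or_eq_of_mk_mem_tourEdges (hpq : p ≠ q) (hp : s(v, p) ∈ tourEdges σ)
    (hq : s(v, q) ∈ tourEdges σ) (hu : s(v, u) ∈ tourEdges σ) : u = p ∨ u = q := by
  rw [mk_mem_tourEdges] at hp hq hu
  grind

namespace IsTour

lemma card_tourEdges (h : IsTour σ) (hV : 3 ≤ Fintype.card V) :
    #(tourEdges σ) = Fintype.card V := by
  rw [tourEdges, card_image_of_injective, card_univ]
  intro u v huv
  rcases Sym2.eq_iff.1 huv with ⟨huv, -⟩ | ⟨hu, hv⟩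
  · exact huv
  · exact absurd (hu ▸ hv : σ (σ v) = v) (h.apply_apply_ne hV v)

lemma exists_mk_mem_ne (h : IsTour σ) (hV : 3 ≤ Fintype.card V) (v q : V) :
    ∃ u, s(v, u) ∈ tourEdges σ ∧ u ≠ q := by
  by_cases hq : σ v = q
  · exact ⟨σ.symm v, mk_mem_tourEdges.2 (.inr rfl), hq ▸ h.symm_apply_ne_apply hV v⟩
  · exact ⟨σ v, mk_mem_tourEdges.2 (.inl rfl), hq⟩

end IsTour

end Tour

section Sequence

variable {w : Sym2 V → ℝ} {k : ℕ} {σ τ : Equiv.Perm V} {l : List (Equiv.Perm V)}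

lemma isLocalOpt_congr (h : tourEdges σ = tourEdges τ) :
    IsLocalOpt w k σ ↔ IsLocalOpt w k τ := by
  simp only [IsLocalOpt, ImprovingKSwap, IsKSwap, tourWeight, h]

lemma maximalImprovingSwapSeq_cons : MaximalImprovingSwapSeq w k σ (τ :: l) ↔
    ImprovingKSwap w k σ τ ∧ MaximalImprovingSwapSeq w k τ l := by
  simp only [MaximalImprovingSwapSeq, ImprovingSwapSeq, List.getLast_cons_cons, and_assoc]

end Sequence

section Transfer

variable {W : Type*} [Fintype W] [DecidableEq W] (e : V ≃ W) {w : Sym2 W → ℝ} {k : ℕ}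
  {σ τ : Equiv.Perm V}

lemma IsTour.permCongr (h : IsTour σ) : IsTour (e.permCongr σ) := by
  obtain ⟨v, hv, -⟩ := h.1
  refine .of_sameCycle (v := e v) (by simpa using hv) fun u => ?_
  obtain ⟨n, hn⟩ := h.1.sameCycle hv (h.apply_ne (e.symm u))
  refine ⟨n, ?_⟩
  rw [← Equiv.permCongrHom_coe, ← map_zpow]
  simp [hn]

lemma isTour_permCongr_iff : IsTour (e.permCongr σ) ↔ IsTour σ :=
  ⟨fun h => by simpa [← Equiv.permCongr_symm] using h.permCongr e.symm, fun h => h.permCongr e⟩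

lemma tourEdges_permCongr :
    tourEdges (e.permCongr σ) = (tourEdges σ).map e.toEmbedding.sym2Map := by
  simp only [tourEdges, map_eq_image, image_image, ← image_univ_equiv e]
  simp [Function.comp_def]

lemma tourWeight_permCongr :
    tourWeight w (e.permCongr σ) = tourWeight (w ∘ Sym2.map e) σ := by
  rw [tourWeight, tourEdges_permCongr, sum_map]
  rfl

lemma improvingKSwap_permCongr_iff :
    ImprovingKSwap w k (e.permCongr σ) (e.permCongr τ) ↔
      ImprovingKSwap (w ∘ Sym2.map e) k σ τ := by
  simp only [ImprovingKSwap, IsKSwap, isTour_permCongr_iff, tourWeight_permCongr,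
    tourEdges_permCongr, ← Finset.map_sdiff, card_map]

lemma isLocalOpt_permCongr_iff :
    IsLocalOpt w k (e.permCongr σ) ↔ IsLocalOpt (w ∘ Sym2.map e) k σ :=
  e.permCongr.forall_congr_right.symm.trans <|
    forall_congr' fun _ => not_congr (improvingKSwap_permCongr_iff e)

lemma improvingSwapSeq_map_permCongr_iff {l : List (Equiv.Perm V)} :
    ImprovingSwapSeq w k (e.permCongr σ) (l.map e.permCongr) ↔
      ImprovingSwapSeq (w ∘ Sym2.map e) k σ l := by
  induction l generalizing σ with
  | nil => rfl
  | cons τ l ih => exact and_congr (improvingKSwap_permCongr_iff e) ih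

lemma maximalImprovingSwapSeq_map_permCongr_iff {l : List (Equiv.Perm V)} :
    MaximalImprovingSwapSeq w k (e.permCongr σ) (l.map e.permCongr) ↔
      MaximalImprovingSwapSeq (w ∘ Sym2.map e) k σ l := by
  refine and_congr (improvingSwapSeq_map_permCongr_iff e) ?_
  rw [← isLocalOpt_permCongr_iff e, ← List.getLast_map (f := e.permCongr) (by simp)]
  rfl

lemma tspKOptAllExp_of_fintype {c : ℝ} (hc : 1 < c)
    (h : ∀ N : ℕ, ∃ (W : Type) (_ : Fintype W) (_ : DecidableEq W), N ≤ Fintype.card W ∧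
      ∃ (w : Sym2 W → ℝ) (σ₀ : Equiv.Perm W), (∀ a, 0 ≤ w a) ∧ IsTour σ₀ ∧
        ∀ l, MaximalImprovingSwapSeq w k σ₀ l → c ^ Fintype.card W ≤ l.length) :
    TSPKOptAllExp k := by
  refine ⟨c, hc, fun N => ?_⟩
  obtain ⟨W, _, _, hN, w, σ₀, hw, hσ₀, hl⟩ := h N
  let e : Fin (Fintype.card W) ≃ W := (Fintype.equivFin W).symm
  refine ⟨Fintype.card W, hN, w ∘ Sym2.map e, e.symm.permCongr σ₀, fun a => hw _,
    hσ₀.permCongr e.symm, fun l hmax => ?_⟩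
  rw [← maximalImprovingSwapSeq_map_permCongr_iff e, ← e.permCongr_symm,
    Equiv.apply_symm_apply] at hmax
  simpa using hl _ hmax

end Transfer

namespace GearTSP

/-- The vertices of the instance. Gear `i` is the cycle of length `2 * P` through the vertices
`entry i x` and `exit i y`, in which `entry i x` is adjacent to `exit i x` and `exit i (x + 1)`. -/
inductive Vertex (m P : ℕ)
  | entry (i : Fin (m + 2)) (x : ZMod P)
  | exit (i : Fin (m + 2)) (y : ZMod P)
  deriving DecidableEq

open Vertex

variable {m P : ℕ} {b b' : Fin (m + 2) → ZMod P} {r r' : Fin (m + 2) → Fin 2}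
  {i j : Fin (m + 2)} {x y : ZMod P} {s t : Fin 2} {e : Sym2 (Vertex m P)}

namespace Vertex

/-- A vertex is an entry or an exit, each given by a gear and a position on it. -/
def sumEquiv (m P : ℕ) :
    Vertex m P ≃ (Fin (m + 2) × ZMod P) ⊕ (Fin (m + 2) × ZMod P) where
  toFun
    | entry i x => .inl (i, x)
    | exit i y => .inr (i, y)
  invFun := Sum.elim (fun q => entry q.1 q.2) (fun q => exit q.1 q.2)
  left_inv v := by cases v <;> rfl
  right_inv v := by cases v <;> rfl

instance [NeZero P] : Fintype (Vertex m P) := .ofEquiv _ (sumEquiv m P).symm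

lemma card_eq [NeZero P] : Fintype.card (Vertex m P) = (m + 2) * (2 * P) := by
  rw [Fintype.card_congr (sumEquiv m P)]
  simp only [Fintype.card_sum, Fintype.card_prod, Fintype.card_fin, ZMod.card]
  ring

lemma three_le_card [NeZero P] : 3 ≤ Fintype.card (Vertex m P) := by
  have := NeZero.pos P
  rw [card_eq]
  nlinarith

end Vertex

/-- The edge of gear `i` from `entry i x` to `exit i (x + s)`. -/
def gearEdge (i : Fin (m + 2)) (x : ZMod P) (s : Fin 2) : Sym2 (Vertex m P) :=
  s(entry i x, exit i (x + (s : ℕ)))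

/-- The position at which the tour `GearTSP.tour b r` leaves gear `i`. -/
def leave (b : Fin (m + 2) → ZMod P) (r : Fin (m + 2) → Fin 2) (i : Fin (m + 2)) : ZMod P :=
  b i + (r i : ℕ)

/-- The edge of the tour `GearTSP.tour b r` from gear `i` to the cyclically next gear. -/
def linkEdge (b : Fin (m + 2) → ZMod P) (r : Fin (m + 2) → Fin 2) (i : Fin (m + 2)) :
    Sym2 (Vertex m P) :=
  s(exit i (leave b r i), entry (i + 1) (b (i + 1)))

/-- The tour that runs through each gear `i` along all its edges but `gearEdge i (b i) (r i)`,
from `entry i (b i)` to `exit i (leave b r i)`, and then moves on to the cyclically next gear. -/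
def tour (b : Fin (m + 2) → ZMod P) (r : Fin (m + 2) → Fin 2) : Equiv.Perm (Vertex m P) where
  toFun
    | entry i x => exit i (x + 1 - (r i : ℕ))
    | exit i y => if y = leave b r i then entry (i + 1) (b (i + 1)) else entry i (y - (r i : ℕ))
  invFun
    | entry i x => if x = b i then exit (i - 1) (leave b r (i - 1)) else exit i (x + (r i : ℕ))
    | exit i y => entry i (y + (r i : ℕ) - 1)
  left_inv
    | entry i x => by simp
    | exit i y => by
      by_cases h : y = leave b r i
      · simp [h]
      · have h' : y - ((r i : ℕ) : ZMod P) ≠ b i := mt sub_eq_iff_eq_add.1 h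
        simp [h, h']
  right_inv
    | entry i x => by
      by_cases h : x = b i <;> simp [h, leave]
    | exit i y => by simp

lemma tour_entry : tour b r (entry i x) = exit i (x + 1 - ((r i : ℕ) : ZMod P)) := rfl

lemma tour_exit_leave : tour b r (exit i (leave b r i)) = entry (i + 1) (b (i + 1)) := if_pos rfl

lemma tour_exit_of_ne (h : y ≠ leave b r i) :
    tour b r (exit i y) = entry i (y - ((r i : ℕ) : ZMod P)) := if_neg h

lemma add_one_ne (i : Fin (m + 2)) : i + 1 ≠ i := by simp

lemma gearEdge_inj (hP : 1 < P) : gearEdge i x s = gearEdge j y t ↔ i = j ∧ x = y ∧ s = t := by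
  have : Fact (1 < P) := ⟨hP⟩
  constructor
  · simp only [gearEdge, Sym2.eq_iff, entry.injEq, exit.injEq, reduceCtorEq, false_and, or_false]
    rintro ⟨⟨rfl, rfl⟩, -, h⟩
    refine ⟨rfl, rfl, ?_⟩
    fin_cases s <;> fin_cases t <;> simp_all
  · rintro ⟨rfl, rfl, rfl⟩
    rfl

lemma gearEdge_triple_injective (hP : 1 < P) : Function.Injective
    fun q : Fin (m + 2) × ZMod P × Fin 2 => gearEdge q.1 q.2.1 q.2.2 := fun p q h => by
  obtain ⟨h1, h2, h3⟩ := (gearEdge_inj hP).1 h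
  exact Prod.ext h1 (Prod.ext h2 h3)

lemma linkEdge_inj : linkEdge b r i = linkEdge b' r' j ↔
    i = j ∧ leave b r i = leave b' r' j ∧ b (i + 1) = b' (j + 1) := by
  simp only [linkEdge, Sym2.eq_iff, entry.injEq, exit.injEq, reduceCtorEq, false_and, or_false]
  grind

lemma linkEdge_ne_gearEdge : linkEdge b r i ≠ gearEdge j x s := by
  simp only [linkEdge, gearEdge, ne_eq, Sym2.eq_iff]
  have := add_one_ne i
  grind

section

variable [NeZero P]

variable (m P) in
/-- The edges of all gears. -/
def gearEdges : Finset (Sym2 (Vertex m P)) :=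
  univ.image fun q : Fin (m + 2) × ZMod P × Fin 2 => gearEdge q.1 q.2.1 q.2.2

lemma mem_gearEdges : e ∈ gearEdges m P ↔ ∃ i x s, gearEdge i x s = e := by
  simp [gearEdges]

lemma gearEdge_mem_gearEdges : gearEdge i x s ∈ gearEdges m P := mem_gearEdges.2 ⟨i, x, s, rfl⟩

lemma linkEdge_notMem_gearEdges : linkEdge b r i ∉ gearEdges m P := by
  rw [mem_gearEdges]
  rintro ⟨j, x, s, h⟩
  exact linkEdge_ne_gearEdge h.symm

lemma card_gearEdges (hP : 1 < P) : #(gearEdges m P) = Fintype.card (Vertex m P) := by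
  rw [gearEdges, card_image_of_injective _ (gearEdge_triple_injective hP), card_eq]
  simp [mul_comm]

lemma sum_gearEdges (hP : 1 < P) (w : Sym2 (Vertex m P) → ℝ) :
    ∑ e ∈ gearEdges m P, w e = ∑ i, ∑ x, ∑ s, w (gearEdge i x s) := by
  rw [gearEdges, sum_image (gearEdge_triple_injective hP).injOn]
  simp only [Fintype.sum_prod_type]

lemma sameCycle_tour_entry (x : ZMod P) :
    (tour b r).SameCycle (entry i (b i)) (entry i x) := by
  obtain ⟨ε, hε⟩ : ∃ ε : ZMod P, ε = 1 - 2 * (r i : ℕ) := ⟨_, rfl⟩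
  have hstep (n : ℕ) : (tour b r).SameCycle (entry i (b i)) (entry i (b i + ε * n)) := by
    induction n with
    | zero => simp [Equiv.Perm.SameCycle.refl]
    | succ n ih =>
      by_cases h : b i + ε * (n + 1 : ℕ) = b i
      · rw [h]
      · have hne : b i + ε * n + 1 - (r i : ℕ) ≠ leave b r i := by grind [leave]
        rw [← Equiv.Perm.sameCycle_apply_right, ← Equiv.Perm.sameCycle_apply_right, tour_entry,
          tour_exit_of_ne hne] at ih
        convert ih using 2
        grind
  have hε2 : ε * ε = 1 := by
    have h : r i = 0 ∨ r i = 1 := by omega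
    rcases h with h | h <;> rw [hε, h] <;> norm_num
  have := hstep (ε * (x - b i)).val
  rwa [ZMod.natCast_zmod_val, ← mul_assoc, hε2, one_mul, add_sub_cancel] at this

lemma sameCycle_tour_exit (y : ZMod P) :
    (tour b r).SameCycle (entry i (b i)) (exit i y) := by
  have h := sameCycle_tour_entry (b := b) (r := r) (i := i) (y + (r i : ℕ) - 1)
  rw [← Equiv.Perm.sameCycle_apply_right, tour_entry] at h
  simpa using h

lemma isTour_tour (b : Fin (m + 2) → ZMod P) (r : Fin (m + 2) → Fin 2) : IsTour (tour b r) := by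
  have hgear (i : Fin (m + 2)) : (tour b r).SameCycle (entry 0 (b 0)) (entry i (b i)) := by
    induction i using Fin.induction with
    | zero => rfl
    | succ i ih =>
      have h := ih.trans (sameCycle_tour_exit (leave b r i.castSucc))
      rwa [← Equiv.Perm.sameCycle_apply_right, tour_exit_leave, Fin.coeSucc_eq_succ] at h
  exact .of_sameCycle (v := entry 0 (b 0)) (by simp [tour_entry]) fun
    | entry i x => (hgear i).trans (sameCycle_tour_entry x)
    | exit i y => (hgear i).trans (sameCycle_tour_exit y)

lemma mem_tourEdges_tour : e ∈ tourEdges (tour b r) ↔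
    (∃ i x s, (x, s) ≠ (b i, r i) ∧ gearEdge i x s = e) ∨ ∃ i, linkEdge b r i = e := by
  rw [tourEdges, mem_image]
  constructor
  · rintro ⟨⟨i, x⟩ | ⟨i, y⟩, -, rfl⟩
    · refine .inl ⟨i, x, 1 - r i, by grind, ?_⟩
      have h : r i = 0 ∨ r i = 1 := by omega
      rcases h with h | h <;> simp [tour_entry, gearEdge, h]
    · by_cases h : y = leave b r i
      · exact .inr ⟨i, by rw [h, tour_exit_leave, linkEdge]⟩
      · refine .inl ⟨i, y - (r i : ℕ), r i, by grind [leave], ?_⟩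
        rw [tour_exit_of_ne h, gearEdge, sub_add_cancel, Sym2.eq_swap]
  · rintro (⟨i, x, s, h, rfl⟩ | ⟨i, rfl⟩)
    · by_cases hs : s = r i
      · refine ⟨exit i (x + (s : ℕ)), mem_univ _, ?_⟩
        rw [tour_exit_of_ne (by grind [leave]), gearEdge, hs, add_sub_cancel_right, Sym2.eq_swap]
      · refine ⟨entry i x, mem_univ _, ?_⟩
        have hr : r i = 0 ∧ s = 1 ∨ r i = 1 ∧ s = 0 := by omega
        rcases hr with ⟨hr, rfl⟩ | ⟨hr, rfl⟩ <;> simp [tour_entry, gearEdge, hr]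
    · exact ⟨exit i (leave b r i), mem_univ _, by rw [tour_exit_leave, linkEdge]⟩

lemma gearEdge_mem_tourEdges_tour (hP : 1 < P) :
    gearEdge i x s ∈ tourEdges (tour b r) ↔ (x, s) ≠ (b i, r i) := by
  rw [mem_tourEdges_tour]
  constructor
  · rintro (⟨j, y, t, h, he⟩ | ⟨j, he⟩)
    · obtain ⟨rfl, rfl, rfl⟩ := (gearEdge_inj hP).1 he
      exact h
    · exact absurd he linkEdge_ne_gearEdge
  · exact fun h => .inl ⟨i, x, s, h, rfl⟩

lemma linkEdge_mem_tourEdges_tour :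
    linkEdge b' r' i ∈ tourEdges (tour b r) ↔ linkEdge b' r' i = linkEdge b r i := by
  rw [mem_tourEdges_tour]
  constructor
  · rintro (⟨j, y, t, -, he⟩ | ⟨j, he⟩)
    · exact absurd he.symm linkEdge_ne_gearEdge
    · obtain ⟨rfl, -⟩ := linkEdge_inj.1 he
      exact he.symm
  · exact fun h => .inr ⟨i, h.symm⟩

lemma tourWeight_tour (hP : 1 < P) (w : Sym2 (Vertex m P) → ℝ) :
    tourWeight w (tour b r) = ∑ e ∈ gearEdges m P, w e +
      ∑ i, (w (linkEdge b r i) - w (gearEdge i (b i) (r i))) := by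
  let missing : Finset (Sym2 (Vertex m P)) := univ.image fun i => gearEdge i (b i) (r i)
  let links : Finset (Sym2 (Vertex m P)) := univ.image (linkEdge b r)
  have hunion : tourEdges (tour b r) ∪ missing = gearEdges m P ∪ links := by
    ext e
    simp only [missing, links, mem_union, mem_tourEdges_tour, mem_gearEdges, mem_image, mem_univ,
      true_and]
    grind
  have hmissing : Disjoint (tourEdges (tour b r)) missing := by
    simp [missing, disjoint_right, gearEdge_mem_tourEdges_tour hP]
  have hlinks : Disjoint (gearEdges m P) links := by
    simp [links, disjoint_right, linkEdge_notMem_gearEdges]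
  have hsum := congr_arg (fun E => ∑ e ∈ E, w e) hunion
  simp only [sum_union hmissing, sum_union hlinks] at hsum
  rw [sum_image fun i _ j _ h => ((gearEdge_inj hP).1 h).1,
    sum_image fun i _ j _ h => (linkEdge_inj.1 h).1] at hsum
  rw [tourWeight, sum_sub_distrib]
  linarith

lemma card_sdiff_tourEdges_tour_le (hP : 1 < P) :
    #(tourEdges (tour b r) \ tourEdges (tour b' r')) ≤
      #{i | (b i, r i) ≠ (b' i, r' i)} + #{i | linkEdge b r i ≠ linkEdge b' r' i} := by
  refine (card_le_card fun e he => ?_).trans <| (card_union_le _ _).trans <|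
    add_le_add (card_image_le (f := fun i => gearEdge i (b' i) (r' i)))
      (card_image_le (f := linkEdge b r))
  simp only [mem_union, mem_image, mem_filter, mem_univ, true_and]
  rw [mem_sdiff, mem_tourEdges_tour] at he
  obtain ⟨⟨i, x, s, hne, rfl⟩ | ⟨i, rfl⟩, he'⟩ := he
  · rw [gearEdge_mem_tourEdges_tour hP, not_not, Prod.mk.injEq] at he'
    obtain ⟨rfl, rfl⟩ := he'
    exact .inl ⟨i, hne.symm, rfl⟩
  · exact .inr ⟨i, mt linkEdge_mem_tourEdges_tour.2 he', rfl⟩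

lemma card_leave_ne_le_card_sdiff :
    #{i | leave b r i ≠ leave b' r' i} ≤ #(tourEdges (tour b r) \ tourEdges (tour b' r')) := by
  refine card_le_card_of_injOn (linkEdge b r) (fun i hi => ?_)
    fun i _ j _ h => (linkEdge_inj.1 h).1
  rw [mem_coe, mem_sdiff]
  exact ⟨linkEdge_mem_tourEdges_tour.2 rfl, fun h =>
    (mem_filter.1 hi).2 (linkEdge_inj.1 (linkEdge_mem_tourEdges_tour.1 h)).2.1⟩

end

/-- The length of the nontrivial edges of gear `i`: each gear is five times finer than the one
before it. -/
noncomputable def scale {m : ℕ} (i : Fin (m + 2)) : ℝ := 5 ^ (i.rev : ℕ)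

/-- A lower bound for the weight of an edge outside the gears, large enough that a tour among
whose edges are `m + 3` such edges is heavier than `GearTSP.heavy`. -/
noncomputable def base (m P : ℕ) : ℝ := 1 + (P + 4) * ∑ i : Fin (m + 2), scale i

/-- The weight of the edges that no tour of the intended shape uses. -/
noncomputable def heavy (m P : ℕ) : ℝ := (m + 3) * base m P

/-- The weight of the edge from `exit j y` to `entry (j + 1) x`. The difference `x - 2 * y` is
confined to `{0, 1, 2}`, except from the last gear to gear `0`, where instead `x` must be `0`. -/
noncomputable def linkCost (j : Fin (m + 2)) (y x : ZMod P) : ℝ :=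
  Fin.lastCases (if x = 0 then base m P else heavy m P)
    (fun i => if (x - 2 * y).val ≤ 2 then base m P + 2 * (2 - (x - 2 * y).val) * scale i.succ
      else heavy m P) j

/-- The weight of the edge between `entry i x` and `exit j y`. -/
noncomputable def cost (i : Fin (m + 2)) (x : ZMod P) (j : Fin (m + 2)) (y : ZMod P) : ℝ :=
  if i = j then if y = x then 0 else if y = x + 1 then scale i else heavy m P
  else if i = j + 1 then linkCost j y x else heavy m P

/-- The weights of the instance. -/
noncomputable def weight : Sym2 (Vertex m P) → ℝ :=
  Sym2.lift ⟨fun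
    | entry i x, exit j y | exit j y, entry i x => cost i x j y
    | _, _ => heavy m P, by rintro (_ | _) (_ | _) <;> rfl⟩

lemma scale_pos (i : Fin (m + 2)) : 0 < scale i := by
  unfold scale
  positivity

lemma scale_castSucc (i : Fin (m + 1)) : scale i.castSucc = 5 * scale i.succ := by
  rw [scale, scale, Fin.rev_castSucc, Fin.rev_succ, Fin.val_succ, Fin.val_castSucc, pow_succ']

lemma base_pos : 0 < base m P := by
  have : 0 ≤ ∑ i : Fin (m + 2), scale i := sum_nonneg fun i _ => (scale_pos i).le
  unfold base
  positivity

lemma base_lt_heavy : base m P < heavy m P := by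
  have := base_pos (m := m) (P := P)
  rw [heavy]
  nlinarith [Nat.cast_nonneg (α := ℝ) m]

lemma base_le_linkCost : base m P ≤ linkCost j y x := by
  induction j using Fin.lastCases with
  | last =>
    rw [linkCost, Fin.lastCases_last]
    split_ifs
    exacts [le_rfl, base_lt_heavy.le]
  | cast i =>
    rw [linkCost, Fin.lastCases_castSucc]
    split_ifs with h
    · have hd : ((x - 2 * y).val : ℝ) ≤ 2 := mod_cast h
      nlinarith [scale_pos i.succ]
    · exact base_lt_heavy.le

lemma linkCost_last_zero : linkCost (Fin.last (m + 1)) y 0 = base m P := by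
  rw [linkCost, Fin.lastCases_last, if_pos rfl]

lemma linkCost_last_lt_iff : linkCost (Fin.last (m + 1)) y x < heavy m P ↔ x = 0 := by
  rw [linkCost, Fin.lastCases_last]
  split_ifs with h <;> simp [h, base_lt_heavy]

lemma linkCost_castSucc {i : Fin (m + 1)} (hP : 2 < P) (d : Fin 3) :
    linkCost i.castSucc y (2 * y + (d : ℕ)) = base m P + 2 * (2 - (d : ℕ)) * scale i.succ := by
  rw [linkCost, Fin.lastCases_castSucc, add_sub_cancel_left, ZMod.val_natCast_of_lt (by omega),
    if_pos (by omega)]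

lemma exists_of_linkCost_castSucc_lt [NeZero P] {i : Fin (m + 1)}
    (h : linkCost i.castSucc y x < heavy m P) : ∃ d : Fin 3, x = 2 * y + (d : ℕ) := by
  rw [linkCost, Fin.lastCases_castSucc] at h
  split_ifs at h with hd
  · exact ⟨⟨(x - 2 * y).val, by omega⟩, by simp⟩
  · exact absurd h (lt_irrefl _)

lemma weight_entry_exit : weight s(entry i x, exit j y) = cost i x j y := rfl

lemma weight_gearEdge (hP : 1 < P) : weight (gearEdge i x s) = (s : ℕ) * scale i := by
  have : Fact (1 < P) := ⟨hP⟩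
  rw [gearEdge, weight_entry_exit, cost, if_pos rfl]
  fin_cases s <;> simp

lemma weight_link : weight s(exit j y, entry (j + 1) x) = linkCost j y x := by
  rw [Sym2.eq_swap, weight_entry_exit, cost, if_neg (add_one_ne j), if_pos rfl]

section

variable [NeZero P]

lemma cases_of_cost_lt_heavy (h : cost i x j y < heavy m P) :
    s(entry i x, exit j y) ∈ gearEdges m P ∨ i = j + 1 ∧ linkCost j y x < heavy m P := by
  unfold cost at h
  rw [mem_gearEdges]
  split_ifs at h with hij hyx hyx hij
  · exact .inl ⟨i, x, 0, by simp [gearEdge, hij, hyx]⟩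
  · exact .inl ⟨i, x, 1, by simp [gearEdge, hij, hyx]⟩
  · exact absurd h (lt_irrefl _)
  · exact .inr ⟨hij, h⟩
  · exact absurd h (lt_irrefl _)

lemma cases_of_weight_lt_heavy (he : weight e < heavy m P) : e ∈ gearEdges m P ∨
    ∃ j y x, e = s(exit j y, entry (j + 1) x) ∧ linkCost j y x < heavy m P := by
  induction e with
  | _ u v =>
    match u, v with
    | entry i x, exit j y =>
      refine (cases_of_cost_lt_heavy he).imp_right fun ⟨hij, h⟩ => ⟨j, y, x, ?_, h⟩
      rw [hij, Sym2.eq_swap]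
    | exit j y, entry i x =>
      rw [Sym2.eq_swap]
      refine (cases_of_cost_lt_heavy he).imp_right fun ⟨hij, h⟩ => ⟨j, y, x, ?_, h⟩
      rw [hij, Sym2.eq_swap]
    | entry i x, entry j y => exact absurd he (lt_irrefl _)
    | exit i x, exit j y => exact absurd he (lt_irrefl _)

lemma base_le_weight (he : e ∉ gearEdges m P) : base m P ≤ weight e := by
  by_contra! h
  obtain ⟨j, y, x, rfl, -⟩ := (cases_of_weight_lt_heavy (h.trans base_lt_heavy)).resolve_left he
  exact h.not_ge (weight_link.symm ▸ base_le_linkCost)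

lemma weight_nonneg (hP : 1 < P) (e : Sym2 (Vertex m P)) : 0 ≤ weight e := by
  by_cases he : e ∈ gearEdges m P
  · obtain ⟨i, x, s, rfl⟩ := mem_gearEdges.1 he
    rw [weight_gearEdge hP]
    have := scale_pos i
    positivity
  · exact base_pos.le.trans (base_le_weight he)

end

/-- The state of the gears in a tour of the intended shape: the tour leaves gear `i` at a position
`slip i` beyond the one where it entered, and enters gear `0` at position `0` and each later gear at
`carry i` plus twice the position where it left the gear `i` before it. -/
structure Config (m : ℕ) where
  slip : Fin (m + 2) → Fin 2
  carry : Fin (m + 1) → Fin 3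

namespace Config

variable {C C' : Config m}

/-- The position at which the tour enters gear `i`, before reduction modulo `P`. -/
def enter (C : Config m) (i : Fin (m + 2)) : ℕ :=
  Fin.induction (motive := fun _ => ℕ) 0 (fun i u => 2 * (u + C.slip i.castSucc) + C.carry i) i

/-- The position at which the tour leaves gear `i`. -/
def leave (C : Config m) (i : Fin (m + 2)) : ℕ := C.enter i + C.slip i

/-- The tour given by the state of the gears. -/
def tour (C : Config m) (P : ℕ) : Equiv.Perm (Vertex m P) :=
  GearTSP.tour (fun i => (C.enter i : ZMod P)) C.slip

/-- The state of the gears in the initial tour. -/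
def initial (m : ℕ) : Config m := ⟨0, 0⟩

/-- The amount by which the tour is lighter than the initial one. -/
noncomputable def gain (C : Config m) : ℝ :=
  ∑ i, (C.slip i : ℕ) * scale i + 2 * ∑ i : Fin (m + 1), (C.carry i : ℕ) * scale i.succ

lemma enter_zero : C.enter 0 = 0 := rfl

lemma enter_succ (i : Fin (m + 1)) :
    C.enter i.succ = 2 * C.leave i.castSucc + C.carry i := rfl

lemma leave_natCast :
    GearTSP.leave (fun i => (C.enter i : ZMod P)) C.slip i = (C.leave i : ZMod P) := by
  simp [GearTSP.leave, leave]

lemma weight_linkEdge_last : weight (linkEdge (fun i => (C.enter i : ZMod P)) C.slip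
    (Fin.last (m + 1))) = base m P := by
  rw [linkEdge, weight_link, Fin.last_add_one, enter_zero, Nat.cast_zero, linkCost_last_zero]

lemma weight_linkEdge_castSucc (hP : 2 < P) (i : Fin (m + 1)) :
    weight (linkEdge (fun i => (C.enter i : ZMod P)) C.slip i.castSucc) =
      base m P + 2 * (2 - (C.carry i : ℕ)) * scale i.succ := by
  rw [linkEdge, weight_link, leave_natCast, Fin.coeSucc_eq_succ, enter_succ, Nat.cast_add,
    Nat.cast_mul, Nat.cast_ofNat, linkCost_castSucc hP]

lemma isTour_tour (C : Config m) (P : ℕ) [NeZero P] : IsTour (C.tour P) := GearTSP.isTour_tour _ _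

section

variable [NeZero P]

lemma tourWeight_tour (hP : 2 < P) : tourWeight weight (C.tour P) =
    P * ∑ i : Fin (m + 2), scale i + (m + 2) * base m P + 4 * ∑ i : Fin (m + 1), scale i.succ
      - C.gain := by
  have hgears : ∑ e ∈ gearEdges m P, weight e = P * ∑ i : Fin (m + 2), scale i := by
    simp [sum_gearEdges (by omega : 1 < P), weight_gearEdge (by omega : 1 < P), mul_sum]
  rw [tour, GearTSP.tourWeight_tour (by omega), hgears, sum_sub_distrib,
    Fin.sum_univ_castSucc (fun i => weight (linkEdge _ _ i)), weight_linkEdge_last]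
  simp only [weight_linkEdge_castSucc hP, weight_gearEdge (by omega : 1 < P), sum_add_distrib,
    sum_const, card_univ, Fintype.card_fin, mul_sub, sub_mul, sum_sub_distrib, ← mul_sum, gain,
    mul_assoc, nsmul_eq_mul]
  push_cast
  ring

lemma tourWeight_tour_lt_iff (hP : 2 < P) :
    tourWeight weight (C'.tour P) < tourWeight weight (C.tour P) ↔ C.gain < C'.gain := by
  rw [tourWeight_tour hP, tourWeight_tour hP, sub_lt_sub_iff_left]

lemma tourWeight_tour_lt_heavy (hP : 2 < P) : tourWeight weight (C.tour P) < heavy m P := by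
  have hgain : 0 ≤ C.gain := by
    have h (i : Fin (m + 2)) : 0 ≤ scale i := (scale_pos i).le
    exact add_nonneg (sum_nonneg fun i _ => mul_nonneg (Nat.cast_nonneg _) (h i))
      (mul_nonneg zero_le_two (sum_nonneg fun i _ => mul_nonneg (Nat.cast_nonneg _) (h _)))
  have hsum : ∑ i : Fin (m + 1), scale i.succ ≤ ∑ i : Fin (m + 2), scale i := by
    rw [Fin.sum_univ_succ scale]
    exact le_add_of_nonneg_left (scale_pos 0).le
  rw [tourWeight_tour hP, heavy]
  nlinarith [base.eq_1 m P]

lemma card_sdiff_le_two_of_enter_eq (hP : 1 < P) (i : Fin (m + 2)) (h : C'.enter = C.enter)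
    (hslip : ∀ l ≠ i, C'.slip l = C.slip l) :
    #(tourEdges (C.tour P) \ tourEdges (C'.tour P)) ≤ 2 := by
  refine (card_sdiff_tourEdges_tour_le hP).trans (add_le_add
    (card_le_card (t := {i}) fun l hl => ?_) (card_le_card (t := {i}) fun l hl => ?_)) <;>
  · rw [mem_singleton]
    by_contra hne
    simp [linkEdge, GearTSP.leave, h, hslip l hne] at hl

lemma card_sdiff_le_two_of_leave_eq (hP : 1 < P) (i : Fin (m + 1)) (h : C'.leave = C.leave)
    (hslip : ∀ l ≠ i.succ, C'.slip l = C.slip l) :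
    #(tourEdges (C.tour P) \ tourEdges (C'.tour P)) ≤ 2 := by
  have henter (l) (hl : l ≠ i.succ) : C'.enter l = C.enter l := by
    simpa [leave, hslip l hl] using congr_fun h l
  refine (card_sdiff_tourEdges_tour_le hP).trans (add_le_add
    (card_le_card (t := {i.succ}) fun l hl => ?_)
    (card_le_card (t := {i.castSucc}) fun l hl => ?_))
  · rw [mem_singleton]
    by_contra hne
    simp [henter l hne, hslip l hne] at hl
  · rw [mem_singleton]
    by_contra hne
    have hne' : l + 1 ≠ i.succ := by
      rwa [← Fin.coeSucc_eq_succ, ne_eq, add_left_inj]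
    simp [linkEdge, leave_natCast, h, henter _ hne'] at hl

lemma not_isLocalOpt {k : ℕ} (hk : 2 ≤ k) (hP : 2 < P)
    (hcard : #(tourEdges (C.tour P) \ tourEdges (C'.tour P)) ≤ 2) (hgain : C.gain < C'.gain) :
    ¬ IsLocalOpt weight k (C.tour P) := fun h =>
  h (C'.tour P) ⟨⟨C'.isTour_tour P, hcard.trans hk⟩, (tourWeight_tour_lt_iff hP).2 hgain⟩

/-- Advancing the position where the tour leaves gear `i`, which turns a carry of `2` at the next
gear, if there is one, into `0`. -/
def advanceLeave (C : Config m) (i : Fin (m + 2)) : Config m where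
  slip := Function.update C.slip i 1
  carry j := if j.castSucc = i then 0 else C.carry j

/-- Advancing the position where the tour enters gear `i.succ`. -/
def advanceEnter (C : Config m) (i : Fin (m + 1)) : Config m where
  slip := Function.update C.slip i.succ 0
  carry := Function.update C.carry i (C.carry i + 1)

lemma enter_advanceLeave (hslip : C.slip i = 0) (hcarry : ∀ j, j.castSucc = i → C.carry j = 2) :
    (C.advanceLeave i).enter = C.enter := by
  ext l
  induction l using Fin.induction with
  | zero => rfl
  | succ j ih =>
    rw [enter_succ, enter_succ, leave, leave, ih]
    by_cases hj : j.castSucc = i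
    · simp only [advanceLeave, hj, hslip, hcarry j hj, Function.update_self, if_true, Fin.val_zero,
        Fin.val_one, Fin.val_two]
      ring
    · simp [advanceLeave, hj]

lemma leave_advanceEnter {i : Fin (m + 1)} (hslip : C.slip i.succ = 1) (hcarry : C.carry i ≠ 2) :
    (C.advanceEnter i).leave = C.leave := by
  ext l
  induction l using Fin.induction with
  | zero => simp [leave, enter_zero, advanceEnter, Function.update_of_ne (Fin.succ_ne_zero i).symm]
  | succ j ih =>
    rw [leave, leave, enter_succ, enter_succ, ih]
    by_cases hj : j = i
    · subst hj
      have : ((C.carry j + 1 : Fin 3) : ℕ) = C.carry j + 1 := by grind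
      simp only [advanceEnter, hslip, this, Function.update_self, Fin.val_zero, Fin.val_one]
      ring
    · simp [advanceEnter, hj]

lemma gain_sub_gain (C C' : Config m) : C'.gain - C.gain =
    ∑ i, (((C'.slip i : ℕ) : ℝ) - (C.slip i : ℕ)) * scale i +
      2 * ∑ i : Fin (m + 1), (((C'.carry i : ℕ) : ℝ) - (C.carry i : ℕ)) * scale i.succ := by
  simp only [gain, sub_mul, sum_sub_distrib]
  ring

lemma gain_lt_gain_advanceLeave (hslip : C.slip i = 0) : C.gain < (C.advanceLeave i).gain := by
  rw [← sub_pos, gain_sub_gain, sum_eq_single_of_mem i (mem_univ i)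
    fun l _ hl => by simp [advanceLeave, hl]]
  induction i using Fin.lastCases with
  | last => simp [advanceLeave, hslip, scale_pos, (Fin.castSucc_lt_last _).ne]
  | cast i =>
    rw [sum_eq_single_of_mem i (mem_univ i) fun l _ hl => by simp [advanceLeave, hl]]
    have hcarry : ((C.carry i : ℕ) : ℝ) ≤ 2 := by exact_mod_cast Fin.is_le (C.carry i)
    simp only [advanceLeave, Function.update_self, hslip, scale_castSucc, if_true, Fin.val_zero,
      Fin.val_one, Nat.cast_zero, Nat.cast_one]
    nlinarith [scale_pos i.succ]

lemma gain_lt_gain_advanceEnter {i : Fin (m + 1)} (hslip : C.slip i.succ = 1)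
    (hcarry : C.carry i ≠ 2) : C.gain < (C.advanceEnter i).gain := by
  rw [← sub_pos, gain_sub_gain,
    sum_eq_single_of_mem i.succ (mem_univ _) fun l _ hl => by simp [advanceEnter, hl],
    sum_eq_single_of_mem i (mem_univ i) fun l _ hl => by simp [advanceEnter, hl]]
  have : ((C.carry i + 1 : Fin 3) : ℕ) = C.carry i + 1 := by grind
  simp only [advanceEnter, Function.update_self, hslip, this, Fin.val_zero, Fin.val_one,
    Nat.cast_zero, Nat.cast_one, Nat.cast_add]
  linarith [scale_pos i.succ]

lemma slip_eq_one_of_isLocalOpt {k : ℕ} (hk : 2 ≤ k) (hP : 2 < P)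
    (h : IsLocalOpt weight k (C.tour P)) (hcarry : ∀ j, j.castSucc = i → C.carry j = 2) :
    C.slip i = 1 := by
  by_contra hne
  have hslip : C.slip i = 0 := by omega
  exact not_isLocalOpt hk hP (card_sdiff_le_two_of_enter_eq (by omega) i
    (enter_advanceLeave hslip hcarry) fun l hl => by simp [advanceLeave, hl])
    (gain_lt_gain_advanceLeave hslip) h

lemma carry_eq_two_of_isLocalOpt {k : ℕ} {i : Fin (m + 1)} (hk : 2 ≤ k) (hP : 2 < P)
    (h : IsLocalOpt weight k (C.tour P)) (hslip : C.slip i.succ = 1) : C.carry i = 2 := by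
  by_contra hcarry
  exact not_isLocalOpt hk hP (card_sdiff_le_two_of_leave_eq (by omega) i
    (leave_advanceEnter hslip hcarry) fun l hl => by simp [advanceEnter, hl])
    (gain_lt_gain_advanceEnter hslip hcarry) h

lemma two_pow_le_leave_last_of_isLocalOpt {k : ℕ} (hk : 2 ≤ k) (hP : 2 < P)
    (h : IsLocalOpt weight k (C.tour P)) : 2 ^ (m + 1) ≤ C.leave (Fin.last (m + 1)) := by
  have hslip (i : Fin (m + 2)) : C.slip i = 1 := by
    induction i using Fin.reverseInduction with
    | last =>
      exact slip_eq_one_of_isLocalOpt hk hP h fun j hj => absurd hj (Fin.castSucc_lt_last j).ne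
    | cast i ih =>
      refine slip_eq_one_of_isLocalOpt hk hP h fun j hj => ?_
      rw [Fin.castSucc_injective _ hj]
      exact carry_eq_two_of_isLocalOpt hk hP h ih
  have hleave (i : Fin (m + 2)) : 2 ^ (i : ℕ) ≤ C.leave i := by
    induction i using Fin.induction with
    | zero => simp [leave, hslip]
    | succ i ih =>
      rw [leave, enter_succ, Fin.val_succ, pow_succ']
      rw [Fin.val_castSucc] at ih
      omega
  exact hleave (Fin.last (m + 1))

end

end Config

section LightTour

variable [NeZero P] {σ : Equiv.Perm (Vertex m P)}

lemma card_tourEdges_sdiff_gearEdges_le (hP : 1 < P) (hσ : tourWeight weight σ < heavy m P) :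
    #(tourEdges σ \ gearEdges m P) ≤ m + 2 := by
  have hsum : (#(tourEdges σ \ gearEdges m P) : ℝ) * base m P ≤ tourWeight weight σ := by
    rw [← nsmul_eq_mul]
    exact (card_nsmul_le_sum _ _ _ fun e he => base_le_weight (mem_sdiff.1 he).2).trans
      (sum_le_sum_of_subset_of_nonneg sdiff_subset fun e _ _ => weight_nonneg hP e)
  have : (#(tourEdges σ \ gearEdges m P) : ℝ) < m + 3 :=
    lt_of_mul_lt_mul_right (hsum.trans_lt hσ) base_pos.le
  exact Nat.lt_succ_iff.1 (by exact_mod_cast this)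

lemma mk_entry_mem_gearEdges {v : Vertex m P} :
    s(entry i x, v) ∈ gearEdges m P ↔ ∃ s : Fin 2, v = exit i (x + ((s : ℕ) : ZMod P)) := by
  simp only [mem_gearEdges, gearEdge, Sym2.eq_iff]
  grind

lemma mk_exit_mem_gearEdges {v : Vertex m P} :
    s(exit i y, v) ∈ gearEdges m P ↔ ∃ s : Fin 2, v = entry i (y - ((s : ℕ) : ZMod P)) := by
  simp only [mem_gearEdges, gearEdge, Sym2.eq_iff]
  constructor
  · grind
  · rintro ⟨s, rfl⟩
    exact ⟨i, _, s, .inr ⟨rfl, by rw [sub_add_cancel]⟩⟩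

lemma mk_mem_gearEdges_of_forall_mem (hP : 1 < P) {v u : Vertex m P}
    (h : ∀ w, s(v, w) ∈ gearEdges m P → s(v, w) ∈ tourEdges σ) (hu : s(v, u) ∈ tourEdges σ) :
    s(v, u) ∈ gearEdges m P := by
  have : Fact (1 < P) := ⟨hP⟩
  obtain ⟨p, q, hpq, hp, hq⟩ : ∃ p q : Vertex m P, p ≠ q ∧ s(v, p) ∈ gearEdges m P ∧
      s(v, q) ∈ gearEdges m P := by
    cases v with
    | entry i x =>
      exact ⟨exit i (x + ((0 : Fin 2) : ℕ)), exit i (x + ((1 : Fin 2) : ℕ)), by simp,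
        mk_entry_mem_gearEdges.2 ⟨0, rfl⟩, mk_entry_mem_gearEdges.2 ⟨1, rfl⟩⟩
    | exit i y =>
      exact ⟨entry i (y - ((0 : Fin 2) : ℕ)), entry i (y - ((1 : Fin 2) : ℕ)),
        by simp [eq_sub_iff_add_eq], mk_exit_mem_gearEdges.2 ⟨0, rfl⟩,
        mk_exit_mem_gearEdges.2 ⟨1, rfl⟩⟩
  obtain rfl | rfl := eq_or_eq_of_mk_mem_tourEdges hpq (h p hp) (h q hq) hu
  exacts [hp, hq]

lemma exists_gearEdge_notMem_tourEdges (hP : 1 < P) (hσ : IsTour σ) (i : Fin (m + 2)) :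
    ∃ x s, gearEdge i x s ∉ tourEdges σ := by
  by_contra! h
  have hentry (x : ZMod P) : ∃ y, σ (entry i x) = exit i y := by
    have := mk_mem_gearEdges_of_forall_mem hP (fun w hw => by
      obtain ⟨s, rfl⟩ := mk_entry_mem_gearEdges.1 hw
      exact h x s) (mk_mem_tourEdges.2 (.inl rfl))
    exact (mk_entry_mem_gearEdges.1 this).imp' _ fun _ h => h
  have hexit (y : ZMod P) : ∃ x, σ (exit i y) = entry i x := by
    have := mk_mem_gearEdges_of_forall_mem hP (fun w hw => by
      obtain ⟨s, rfl⟩ := mk_exit_mem_gearEdges.1 hw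
      simpa [gearEdge, Sym2.eq_swap] using h (y - (s : ℕ)) s) (mk_mem_tourEdges.2 (.inl rfl))
    exact (mk_exit_mem_gearEdges.1 this).imp' _ fun _ h => h
  have hgear : ∃ x : ZMod P, entry (i + 1) 0 = entry i x ∨ entry (i + 1) 0 = exit i x := by
    refine hσ.induction_on (S := fun v => ∃ x, v = entry i x ∨ v = exit i x) ⟨0, .inl rfl⟩ ?_ _
    rintro v ⟨x, rfl | rfl⟩
    · exact (hentry x).imp fun _ => .inr
    · exact (hexit x).imp fun _ => .inl
  simp at hgear

lemma exists_missing_gearEdges (hP : 1 < P) (hσ : IsTour σ)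
    (hlight : tourWeight weight σ < heavy m P) :
    ∃ (b : Fin (m + 2) → ZMod P) (r : Fin (m + 2) → Fin 2),
      ∀ i x s, gearEdge i x s ∈ tourEdges σ ↔ (x, s) ≠ (b i, r i) := by
  choose b r hbr using exists_gearEdge_notMem_tourEdges hP hσ
  have hcard : #(gearEdges m P \ tourEdges σ) ≤ #(univ.image fun i => gearEdge i (b i) (r i)) := by
    rw [card_image_of_injective _ fun i j h => ((gearEdge_inj hP).1 h).1, card_univ,
      Fintype.card_fin, card_sdiff_comm (by
        rw [card_gearEdges hP, hσ.card_tourEdges three_le_card])]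
    exact card_tourEdges_sdiff_gearEdges_le hP hlight
  have himage : univ.image (fun i => gearEdge i (b i) (r i)) = gearEdges m P \ tourEdges σ :=
    eq_of_subset_of_card_le (image_subset_iff.2 fun i _ =>
      mem_sdiff.2 ⟨gearEdge_mem_gearEdges, hbr i⟩) hcard
  refine ⟨b, r, fun i x s => ⟨fun h hxs => ?_, fun h => ?_⟩⟩
  · obtain ⟨rfl, rfl⟩ := Prod.mk.inj hxs
    exact hbr i h
  · by_contra hne
    have hmem : gearEdge i x s ∈ gearEdges m P \ tourEdges σ :=
      mem_sdiff.2 ⟨gearEdge_mem_gearEdges, hne⟩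
    rw [← himage, mem_image] at hmem
    obtain ⟨j, -, hj⟩ := hmem
    obtain ⟨rfl, rfl, rfl⟩ := (gearEdge_inj hP).1 hj
    exact h rfl

lemma weight_lt_heavy_of_mem_tourEdges (hP : 1 < P) (hlight : tourWeight weight σ < heavy m P)
    (he : e ∈ tourEdges σ) : weight e < heavy m P :=
  (single_le_sum (fun e _ => weight_nonneg hP e) he).trans_lt hlight

lemma entry_eq_of_notMem_gearEdges (hP : 1 < P) {u : Vertex m P}
    (h : ∀ x s, gearEdge i x s ∈ tourEdges σ ↔ (x, s) ≠ (b i, r i))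
    (hu : s(entry i x, u) ∈ tourEdges σ) (hu' : s(entry i x, u) ∉ gearEdges m P) : x = b i := by
  by_contra hx
  refine hu' (mk_mem_gearEdges_of_forall_mem hP (fun w hw => ?_) hu)
  obtain ⟨s, rfl⟩ := mk_entry_mem_gearEdges.1 hw
  exact (h x s).2 fun hxs => hx (Prod.mk.inj hxs).1

lemma linkEdge_mem_tourEdges (hP : 1 < P) (hσ : IsTour σ)
    (hlight : tourWeight weight σ < heavy m P)
    (h : ∀ i x s, gearEdge i x s ∈ tourEdges σ ↔ (x, s) ≠ (b i, r i)) (i : Fin (m + 2)) :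
    linkEdge b r i ∈ tourEdges σ ∧ linkCost i (leave b r i) (b (i + 1)) < heavy m P := by
  obtain ⟨u, hu, hne⟩ := hσ.exists_mk_mem_ne three_le_card (exit i (leave b r i))
    (entry i (leave b r i - ((1 - r i : Fin 2) : ℕ)))
  have hu' : s(exit i (leave b r i), u) ∉ gearEdges m P := fun hmem => by
    obtain ⟨s, rfl⟩ := mk_exit_mem_gearEdges.1 hmem
    have hs : s = r i := by
      by_contra hs
      exact hne (by rw [show s = 1 - r i by omega])
    subst hs
    refine (h i (b i) (r i)).1 ?_ rfl
    simpa [leave, gearEdge, Sym2.eq_swap] using hu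
  obtain ⟨j, y, x, he, hcost⟩ := (cases_of_weight_lt_heavy
    (weight_lt_heavy_of_mem_tourEdges hP hlight hu)).resolve_left hu'
  obtain ⟨⟨rfl, rfl⟩, rfl⟩ : (i = j ∧ leave b r i = y) ∧ u = entry (j + 1) x := by
    simpa using he
  rw [Sym2.eq_swap] at hu hu'
  obtain rfl := entry_eq_of_notMem_gearEdges hP (h _) hu hu'
  exact ⟨by rwa [linkEdge, Sym2.eq_swap], hcost⟩

lemma exists_config_of_linkCost_lt (h : ∀ i, linkCost i (leave b r i) (b (i + 1)) < heavy m P) :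
    ∃ C : Config m, b = (fun i => (C.enter i : ZMod P)) ∧ r = C.slip := by
  choose d hd using fun i : Fin (m + 1) => exists_of_linkCost_castSucc_lt (h i.castSucc)
  let C : Config m := ⟨r, d⟩
  refine ⟨C, funext fun i => ?_, rfl⟩
  induction i using Fin.induction with
  | zero =>
    have := h (Fin.last (m + 1))
    rw [linkCost_last_lt_iff, Fin.last_add_one] at this
    rw [this, Config.enter_zero, Nat.cast_zero]
  | succ i ih =>
    rw [← Fin.coeSucc_eq_succ, hd, leave, ih, Fin.coeSucc_eq_succ, Config.enter_succ, Config.leave]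
    push_cast
    rfl

lemma exists_config_of_tourWeight_lt_heavy (hP : 1 < P) (hσ : IsTour σ)
    (hlight : tourWeight weight σ < heavy m P) :
    ∃ C : Config m, tourEdges σ = tourEdges (C.tour P) := by
  obtain ⟨b, r, h⟩ := exists_missing_gearEdges hP hσ hlight
  have hlink := linkEdge_mem_tourEdges hP hσ hlight h
  obtain ⟨C, hb, hr⟩ := exists_config_of_linkCost_lt fun i => (hlink i).2
  refine ⟨C, (eq_of_subset_of_card_le (fun e he => ?_) ?_).symm⟩
  · rw [Config.tour, ← hb, ← hr, mem_tourEdges_tour] at he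
    obtain ⟨i, x, s, hne, rfl⟩ | ⟨i, rfl⟩ := he
    exacts [(h i x s).2 hne, (hlink i).1]
  · rw [hσ.card_tourEdges three_le_card, (C.isTour_tour P).card_tourEdges three_le_card]

end LightTour

lemma abs_add_three_le_three_mul_two_pow {n k P : ℕ} (hP : 6 * 2 ^ k ≤ P) {δ : Fin (n + 1) → ℤ}
    (hzero : |δ 0| ≤ 3) (hsucc : ∀ i : Fin n, |δ i.succ| ≤ 2 * |δ i.castSucc| + 3)
    {S : Finset (Fin (n + 1))} (hS : ∀ i ∉ S, (P : ℤ) ∣ δ i) (hcard : #S ≤ k) (i : Fin (n + 1)) :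
    |δ i| + 3 ≤ 3 * 2 ^ #{l ∈ S | l ≤ i} := by
  have hstep (i : Fin (n + 1)) (c : ℕ) (hc : c ≤ k) (hδ : |δ i| + 3 ≤ 3 * 2 ^ (c + 1))
      (hi : i ∈ S → c < #{l ∈ S | l ≤ i}) : |δ i| + 3 ≤ 3 * 2 ^ #{l ∈ S | l ≤ i} := by
    by_cases hmem : i ∈ S
    · exact hδ.trans (by gcongr <;> grind)
    · have hpow : (3 : ℤ) * 2 ^ (c + 1) ≤ P := by
        calc (3 : ℤ) * 2 ^ (c + 1) = 6 * 2 ^ c := by ring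
          _ ≤ 6 * 2 ^ k := by gcongr; norm_num
          _ ≤ P := by exact_mod_cast hP
      rw [Int.eq_zero_of_abs_lt_dvd (hS i hmem) (by omega), abs_zero, zero_add]
      exact le_mul_of_one_le_right zero_le_three (one_le_pow₀ one_le_two)
  induction i using Fin.induction with
  | zero =>
    refine hstep 0 0 k.zero_le (by norm_num; linarith) fun h => card_pos.2 ⟨0, ?_⟩
    exact mem_filter.2 ⟨h, le_rfl⟩
  | succ i ih =>
    refine hstep i.succ _ ((card_filter_le _ _).trans hcard)
      (by rw [pow_succ]; linarith [hsucc i]) fun h => ?_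
    refine card_lt_card ((ssubset_iff_of_subset fun l hl => ?_).2 ⟨i.succ, ?_, ?_⟩)
    · obtain ⟨hl, hli⟩ := mem_filter.1 hl
      exact mem_filter.2 ⟨hl, hli.trans i.castSucc_lt_succ.le⟩
    · exact mem_filter.2 ⟨h, le_rfl⟩
    · exact fun hl => (mem_filter.1 hl).2.not_gt i.castSucc_lt_succ

namespace Config

variable {C C' : Config m} {k : ℕ}

lemma leave_initial (i : Fin (m + 2)) : (initial m).leave i = 0 := by
  induction i using Fin.induction with
  | zero => rfl
  | succ i ih => rw [leave, enter_succ, ih]; rfl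

variable [NeZero P]

lemma leave_last_le (hP : 6 * 2 ^ k ≤ P)
    (h : #(tourEdges (C.tour P) \ tourEdges (C'.tour P)) ≤ k) :
    C'.leave (Fin.last (m + 1)) ≤ C.leave (Fin.last (m + 1)) + 3 * 2 ^ k := by
  let δ (i : Fin (m + 2)) : ℤ := C'.leave i - C.leave i
  let S : Finset (Fin (m + 2)) := {i | (C.leave i : ZMod P) ≠ C'.leave i}
  have hzero : |δ 0| ≤ 3 := by
    simp only [δ, leave, enter_zero]
    rw [abs_le]
    omega
  have hsucc (i : Fin (m + 1)) : |δ i.succ| ≤ 2 * |δ i.castSucc| + 3 := by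
    have h : δ i.succ = 2 * δ i.castSucc + ((C'.carry i : ℕ) - (C.carry i : ℕ))
        + ((C'.slip i.succ : ℕ) - (C.slip i.succ : ℕ)) := by
      simp only [δ, leave, enter_succ]
      push_cast
      ring
    rw [h, abs_le]
    have := abs_le.1 (le_refl |δ i.castSucc|)
    omega
  have hS (i) (hi : i ∉ S) : (P : ℤ) ∣ δ i := by
    have hi : (C.leave i : ZMod P) = C'.leave i := by simpa [S] using hi
    rw [← ZMod.intCast_zmod_eq_zero_iff_dvd]
    simp [δ, hi]
  have hcard : #S ≤ k := by
    simpa only [leave_natCast] using card_leave_ne_le_card_sdiff.trans h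
  have hδ := abs_add_three_le_three_mul_two_pow hP hzero hsucc hS hcard (Fin.last (m + 1))
  have hpow : (2 : ℤ) ^ #{l ∈ S | l ≤ Fin.last (m + 1)} ≤ 2 ^ k :=
    pow_le_pow_right₀ one_le_two ((card_filter_le _ _).trans hcard)
  have : C'.leave (Fin.last (m + 1)) - C.leave (Fin.last (m + 1)) ≤ (3 : ℤ) * 2 ^ k := by
    linarith [le_abs_self (δ (Fin.last (m + 1)))]
  zify
  linarith

lemma two_pow_le_of_maximalImprovingSwapSeq (hk : 2 ≤ k) (hP : 6 * 2 ^ k ≤ P)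
    {σ : Equiv.Perm (Vertex m P)} {l : List (Equiv.Perm (Vertex m P))}
    (hσ : tourEdges σ = tourEdges (C.tour P)) (h : MaximalImprovingSwapSeq weight k σ l) :
    2 ^ (m + 1) ≤ C.leave (Fin.last (m + 1)) + 3 * 2 ^ k * l.length := by
  have hP' : 2 < P := by
    have := Nat.one_le_two_pow (n := k)
    omega
  induction l generalizing σ C with
  | nil =>
    simpa using two_pow_le_leave_last_of_isLocalOpt hk hP' ((isLocalOpt_congr hσ).1 h.2)
  | cons τ l ih =>
    obtain ⟨⟨⟨hτ, hswap⟩, himp⟩, hl⟩ := maximalImprovingSwapSeq_cons.1 h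
    rw [tourWeight, tourWeight, hσ] at himp
    obtain ⟨C', hC'⟩ := exists_config_of_tourWeight_lt_heavy (by omega) hτ
      (himp.trans (tourWeight_tour_lt_heavy hP'))
    rw [hσ, hC'] at hswap
    calc 2 ^ (m + 1) ≤ C'.leave (Fin.last (m + 1)) + 3 * 2 ^ k * l.length := ih hC' hl
      _ ≤ C.leave (Fin.last (m + 1)) + 3 * 2 ^ k + 3 * 2 ^ k * l.length := by
        gcongr
        exact leave_last_le hP hswap
      _ = C.leave (Fin.last (m + 1)) + 3 * 2 ^ k * (τ :: l).length := by
        rw [List.length_cons]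
        ring

lemma two_pow_le_length {n : ℕ} (hk : 2 ≤ k) (hP : 6 * 2 ^ k ≤ P) (hn : k + 2 ≤ n)
    {l : List (Equiv.Perm (Vertex (2 * n) P))}
    (h : MaximalImprovingSwapSeq weight k ((initial (2 * n)).tour P) l) :
    2 ^ (n + 1) ≤ l.length := by
  have hl := two_pow_le_of_maximalImprovingSwapSeq hk hP rfl h
  rw [leave_initial, zero_add] at hl
  refine Nat.le_of_mul_le_mul_left ?_ (by positivity : 0 < 2 ^ (k + 2))
  calc 2 ^ (k + 2) * 2 ^ (n + 1) ≤ 2 ^ n * 2 ^ (n + 1) := by gcongr; norm_num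
    _ = 2 ^ (2 * n + 1) := by ring
    _ ≤ 3 * 2 ^ k * l.length := hl
    _ ≤ 2 ^ (k + 2) * l.length := by
      gcongr
      rw [pow_add]
      omega

end Config

end GearTSP

theorem tsp_kopt_all_exp_of_five_le_general (k : ℕ) (hk : 2 ≤ k) : TSPKOptAllExp k := by
  obtain ⟨P, hP⟩ : ∃ P, P = 6 * 2 ^ k := ⟨_, rfl⟩
  have hP1 : 1 < P := by
    have := Nat.one_le_two_pow (n := k)
    omega
  have : NeZero P := ⟨by omega⟩
  have hc : ((2 : ℝ) ^ ((4 * P : ℕ) : ℝ)⁻¹) ^ (4 * P) = 2 :=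
    Real.rpow_inv_natCast_pow zero_le_two (by omega)
  refine tspKOptAllExp_of_fintype (Real.one_lt_rpow one_lt_two (by positivity) :
    1 < (2 : ℝ) ^ ((4 * P : ℕ) : ℝ)⁻¹) fun N => ?_
  have hcard : Fintype.card (GearTSP.Vertex (2 * (N + k + 2)) P) = 4 * P * (N + k + 2 + 1) := by
    rw [GearTSP.Vertex.card_eq]
    ring
  refine ⟨GearTSP.Vertex (2 * (N + k + 2)) P, inferInstance, inferInstance, ?_, GearTSP.weight,
    (GearTSP.Config.initial _).tour P, GearTSP.weight_nonneg hP1,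
    GearTSP.Config.isTour_tour _ P, fun l hl => ?_⟩
  · nlinarith
  · rw [hcard, pow_mul, hc]
    exact_mod_cast GearTSP.Config.two_pow_le_length hk hP.ge (by omega) hl

/-- TSP/k-Opt has the all-exp property for every k ≥ 5. -/
theorem tsp_kopt_all_exp_of_five_le (k : ℕ) (hk : 5 ≤ k) : TSPKOptAllExp k :=
  tsp_kopt_all_exp_of_five_le_general k (by omega)
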